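/- Let k ≥ 1 be an integer and define the polynomial S_k(z) = ∑_{j=0}^{k} C(2k,2j) E_{2j} E_{2k−2j} z^j (a polynomial of degree k with integer coefficients). Then every complex root of S_k lies on the unit circle (has absolute value 1), and all roots of S_k are simple. -/

import Mathlib

/-- Auxiliary: `eulerEvenAux m` is the Euler number `E_{2m}`, defined via the
recurrence `∑_{j=0}^{n} C(2n,2j) E_{2j} = 0` for `n ≥ 1`, with `E_0 = 1`. -/
def eulerEvenAux : ℕ → ℚ
  | 0 => 1
  | m + 1 => -∑ j ∈ (Finset.range (m + 1)).attach,
      ((Nat.choose (2 * (m + 1)) (2 * (j : ℕ))) : ℚ) * eulerEvenAux j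
decreasing_by exact Finset.mem_range.mp j.2

/-- The Euler numbers: `E_0 = 1`, `E_n = 0` for odd `n`, and
`∑_{j=0}^{n} C(2n,2j) E_{2j} = 0` for every `n ≥ 1`. -/
def eulerE (n : ℕ) : ℚ := if n % 2 = 1 then 0 else eulerEvenAux (n / 2)

/-- The polynomial `S_k(z) = ∑_{j=0}^{k} C(2k,2j) E_{2j} E_{2k−2j} z^j`,
viewed as a polynomial over `ℂ`. -/
noncomputable def Spoly (k : ℕ) : Polynomial ℂ :=
  ∑ j ∈ Finset.range (k + 1),
    Polynomial.C ((((Nat.choose (2 * k) (2 * j)) : ℚ) * eulerE (2 * j)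
      * eulerE (2 * k - 2 * j) : ℚ) : ℂ) * Polynomial.X ^ j

/-!
If `p` has formal degree `n` and is its own conjugate reciprocal, then `2 (1 - X) p = q - q^*`,
where `q = 2 p₀ + ∑ (pᵢ₊₁ - pᵢ) Xⁱ⁺¹` has degree at most `n` and `^*` denotes the conjugate
reciprocal of formal degree `n + 1`. If the coefficients of `p` vary so little that the constant
term of `q` dominates, then `q` has no zero in the closed unit disc, and comparing `|q|` with
`|q^*|` inside and outside the disc puts all roots of `q - q^*` on the circle, where a logarithmic
derivative estimate shows that they are simple.

Up to a common factor the coefficients of `S_k` are `u_j u_{k-j}`, where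
`u_j = (4 / π) (1 - 3^{-(2j+1)} + 5^{-(2j+1)} - ⋯)` increases from `1` and stays below
`4 / π < 2`. This monotonicity is exactly what bounds the variation of the coefficients.
-/

open Polynomial Filter Topology ComplexConjugate

section ConjugateReciprocal

/-- The conjugate-reciprocal polynomial `p^*(z) = zⁿ · conj (p (1 / conj z))`, where `n` is a
formal degree that may exceed `p.natDegree`. -/
noncomputable def conjReflect (n : ℕ) (p : ℂ[X]) : ℂ[X] :=
  (p.map (starRingEnd ℂ)).reflect n

variable {p : ℂ[X]} {n : ℕ} {z a : ℂ}

lemma coeff_conjReflect (n : ℕ) (p : ℂ[X]) (i : ℕ) :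
    (conjReflect n p).coeff i = conj (p.coeff (revAt n i)) := by
  rw [conjReflect, coeff_reflect, coeff_map]

lemma conjReflect_add (n : ℕ) (p q : ℂ[X]) :
    conjReflect n (p + q) = conjReflect n p + conjReflect n q := by
  simp only [conjReflect, Polynomial.map_add, reflect_add]

lemma eval_conjReflect (hp : p.natDegree ≤ n) (hz : z ≠ 0) :
    (conjReflect n p).eval z = z ^ n * conj (p.eval (conj z)⁻¹) := by
  let := invertibleOfNonzero (inv_ne_zero hz)
  have h := eval₂_reflect_mul_pow (RingHom.id ℂ) z⁻¹ n (p.map (starRingEnd ℂ))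
    (natDegree_map_le.trans hp)
  rw [invOf_eq_inv, inv_inv, ← eval, ← eval, inv_pow] at h
  rw [conjReflect, ← map_inv₀, ← eval_map_apply, Complex.conj_conj, ← h]
  field_simp

lemma eval_conjReflect_of_norm_eq_one (hp : p.natDegree ≤ n) (hz : ‖z‖ = 1) :
    (conjReflect n p).eval z = z ^ n * conj (p.eval z) := by
  have hz₀ : z ≠ 0 := norm_ne_zero_iff.mp (hz ▸ one_ne_zero)
  rw [eval_conjReflect hp hz₀, ← Complex.inv_eq_conj hz, inv_inv]

lemma X_mul_derivative_conjReflect (hp : p.natDegree ≤ n) :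
    X * derivative (conjReflect n p) =
      (n : ℂ[X]) * conjReflect n p - conjReflect n (X * derivative p) := by
  have coeff_X_mul_derivative (q : ℂ[X]) (i : ℕ) : (X * derivative q).coeff i = i * q.coeff i := by
    rcases i with _ | i
    · simp
    · rw [coeff_X_mul, coeff_derivative, mul_comm, Nat.cast_succ]
  ext i
  rw [coeff_X_mul_derivative, coeff_sub, coeff_natCast_mul, coeff_conjReflect, coeff_conjReflect,
    coeff_X_mul_derivative, map_mul, map_natCast, ← sub_mul]
  rcases le_or_gt i n with hi | hi
  · rw [revAt_le hi, Nat.cast_sub hi, sub_sub_cancel]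
  · rw [revAt_eq_self_of_lt hi, coeff_eq_zero_of_natDegree_lt (hp.trans_lt hi), map_zero,
      mul_zero, mul_zero]

lemma norm_sub_le_norm_mul_norm_inv_conj_sub (hz : 1 ≤ ‖z‖) (ha : 1 ≤ ‖a‖) :
    ‖z - a‖ ≤ ‖z‖ * ‖(conj z)⁻¹ - a‖ := by
  have hz₀ : conj z ≠ 0 := by
    rw [_root_.map_ne_zero, ← norm_pos_iff]; linarith
  have hexpand : ‖z‖ * ‖(conj z)⁻¹ - a‖ = ‖1 - conj z * a‖ := by
    rw [← Complex.norm_conj z, ← norm_mul, mul_sub, mul_inv_cancel₀ hz₀]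
  rw [hexpand, ← sq_le_sq₀ (norm_nonneg _) (norm_nonneg _)]
  have key : ‖1 - conj z * a‖ ^ 2 - ‖z - a‖ ^ 2 = (‖z‖ ^ 2 - 1) * (‖a‖ ^ 2 - 1) := by
    simp only [Complex.sq_norm, Complex.normSq_apply, Complex.sub_re, Complex.sub_im,
      Complex.mul_re, Complex.mul_im, Complex.conj_re, Complex.conj_im, Complex.one_re,
      Complex.one_im]
    ring
  have : 0 ≤ (‖z‖ ^ 2 - 1) * (‖a‖ ^ 2 - 1) :=
    mul_nonneg (sub_nonneg.mpr (one_le_pow₀ hz)) (sub_nonneg.mpr (one_le_pow₀ ha))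
  linarith

lemma norm_eval_le_norm_pow_mul_norm_eval_inv_conj (hp : ∀ a ∈ p.roots, 1 ≤ ‖a‖)
    (hz : 1 ≤ ‖z‖) : ‖p.eval z‖ ≤ ‖z‖ ^ p.natDegree * ‖p.eval (conj z)⁻¹‖ := by
  have hsplit := IsAlgClosed.splits p
  have norm_eval (w : ℂ) :
      ‖p.eval w‖ = ‖p.leadingCoeff‖ * (p.roots.map fun a ↦ ‖w - a‖).prod := by
    rw [hsplit.eval_eq_prod_roots, norm_mul]
    congr 1
    refine (map_multiset_prod (normHom (α := ℂ)) _).trans ?_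
    rw [Multiset.map_map]
    rfl
  calc ‖p.eval z‖
      = ‖p.leadingCoeff‖ * (p.roots.map fun a ↦ ‖z - a‖).prod := norm_eval z
    _ ≤ ‖p.leadingCoeff‖ * (p.roots.map fun a ↦ ‖z‖ * ‖(conj z)⁻¹ - a‖).prod := by
      gcongr
      exact Multiset.prod_map_le_prod_map₀ _ _ (fun _ _ ↦ norm_nonneg _)
        fun a ha ↦ norm_sub_le_norm_mul_norm_inv_conj_sub hz (hp a ha)
    _ = ‖z‖ ^ p.natDegree * ‖p.eval (conj z)⁻¹‖ := by
      rw [Multiset.prod_map_mul, Multiset.map_const', Multiset.prod_replicate,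
        ← hsplit.natDegree_eq_card_roots, norm_eval, mul_left_comm]

lemma re_div_sub_le_half (h : ‖z‖ ≤ ‖a‖) : (z / (z - a)).re ≤ 1 / 2 := by
  rcases eq_or_ne z a with rfl | hne
  · simp
  have hpos : 0 < Complex.normSq (z - a) := Complex.normSq_pos.mpr (sub_ne_zero.mpr hne)
  rw [Complex.div_re, ← add_div, div_le_iff₀ hpos]
  have hsq : ‖z‖ ^ 2 ≤ ‖a‖ ^ 2 := by gcongr
  simp only [Complex.sq_norm, Complex.normSq_apply, Complex.sub_re, Complex.sub_im] at hsq ⊢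
  linarith

lemma re_mul_derivative_div_le (h : ∀ a ∈ p.roots, ‖z‖ ≤ ‖a‖) (hz : p.eval z ≠ 0) :
    (z * (p.derivative.eval z / p.eval z)).re ≤ p.natDegree / 2 := by
  have hsplit := IsAlgClosed.splits p
  calc (z * (p.derivative.eval z / p.eval z)).re
      = (p.roots.map fun a ↦ (z / (z - a)).re).sum := by
        rw [hsplit.eval_derivative_div_eval_of_ne_zero hz, ← Multiset.sum_map_mul_left,
          ← Complex.coe_reAddGroupHom, map_multiset_sum, Multiset.map_map]
        simp only [mul_one_div, Function.comp_apply, Complex.coe_reAddGroupHom]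
    _ ≤ (p.roots.map fun _ ↦ (1 / 2 : ℝ)).sum :=
        Multiset.sum_map_le_sum_map _ _ fun a ha ↦ re_div_sub_le_half (h a ha)
    _ = p.natDegree / 2 := by
        rw [Multiset.map_const', Multiset.sum_replicate, ← hsplit.natDegree_eq_card_roots,
          nsmul_eq_mul, mul_one_div]

lemma one_le_norm_of_mem_roots (hp : ∀ w, ‖w‖ < 1 → p.eval w ≠ 0) : ∀ a ∈ p.roots, 1 ≤ ‖a‖ :=
  fun a ha ↦ not_lt.mp fun hlt ↦ hp a hlt (isRoot_of_mem_roots ha)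

lemma norm_le_one_of_eval_eq_eval_conjReflect (hp : ∀ w, ‖w‖ < 1 → p.eval w ≠ 0)
    (hdeg : p.natDegree < n) (h : p.eval z = (conjReflect n p).eval z) : ‖z‖ ≤ 1 := by
  by_contra! hz
  have hz₀ : z ≠ 0 := norm_pos_iff.mp (zero_lt_one.trans hz)
  have hinv : ‖(conj z)⁻¹‖ < 1 := by
    rw [norm_inv, Complex.norm_conj]
    exact inv_lt_one_of_one_lt₀ hz
  have hpos : 0 < ‖p.eval (conj z)⁻¹‖ := norm_pos_iff.mpr (hp _ hinv)
  have hlt : ‖p.eval z‖ < ‖p.eval z‖ :=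
    calc ‖p.eval z‖ ≤ ‖z‖ ^ p.natDegree * ‖p.eval (conj z)⁻¹‖ :=
          norm_eval_le_norm_pow_mul_norm_eval_inv_conj (one_le_norm_of_mem_roots hp) hz.le
      _ < ‖z‖ ^ n * ‖p.eval (conj z)⁻¹‖ := by gcongr
      _ = ‖p.eval z‖ := by
          rw [h, eval_conjReflect hdeg.le hz₀, norm_mul, norm_pow, Complex.norm_conj]
  exact hlt.false

theorem norm_eq_one_of_eval_eq_eval_conjReflect (hp : ∀ w, ‖w‖ < 1 → p.eval w ≠ 0)
    (hdeg : p.natDegree < n) (h : p.eval z = (conjReflect n p).eval z) : ‖z‖ = 1 := by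
  refine (norm_le_one_of_eval_eq_eval_conjReflect hp hdeg h).antisymm ?_
  rcases eq_or_ne z 0 with rfl | hz
  · refine absurd h ?_
    rw [← coeff_zero_eq_eval_zero (conjReflect n p), coeff_conjReflect, revAt_zero,
      coeff_eq_zero_of_natDegree_lt hdeg, map_zero]
    exact hp 0 (by simp)
  -- `p - p^*` is self-inversive up to sign, so the reflected point `1 / conj z` is a root as well.
  have hreflected : p.eval (conj z)⁻¹ = (conjReflect n p).eval (conj z)⁻¹ := by
    have hz' : conj z ≠ 0 := (_root_.map_ne_zero _).mpr hz
    rw [eval_conjReflect hdeg.le (inv_ne_zero hz'), map_inv₀, Complex.conj_conj, inv_inv, h,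
      eval_conjReflect hdeg.le hz, map_mul, map_pow, Complex.conj_conj, ← mul_assoc, ← mul_pow,
      inv_mul_cancel₀ hz', one_pow, one_mul]
  have hle := norm_le_one_of_eval_eq_eval_conjReflect hp hdeg hreflected
  rw [norm_inv, Complex.norm_conj] at hle
  exact (inv_le_one₀ (norm_pos_iff.mpr hz)).mp hle

/-- On the circle, `z (p^*)' = n p^* - zⁿ conj (z p')`, so a double root of `p - p^*` would force
`2 Re (z p' / p) = n`, whereas the roots of `p` only allow `2 Re (z p' / p) ≤ deg p`. -/
theorem eval_derivative_ne_of_eval_eq_eval_conjReflect (hp : ∀ w, ‖w‖ < 1 → p.eval w ≠ 0)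
    (hdeg : p.natDegree < n) (hpz : p.eval z ≠ 0) (h : p.eval z = (conjReflect n p).eval z) :
    p.derivative.eval z ≠ (conjReflect n p).derivative.eval z := by
  intro hderiv
  have hz : ‖z‖ = 1 := norm_eq_one_of_eval_eq_eval_conjReflect hp hdeg h
  set w := z * (p.derivative.eval z / p.eval z) with hw
  have hwp : z * p.derivative.eval z = w * p.eval z := by
    rw [hw]; field_simp
  have hdegX : (X * derivative p).natDegree ≤ n := by
    refine natDegree_mul_le.trans ?_
    have := natDegree_derivative_le p
    rw [natDegree_X]
    omega
  have hsymm : w * p.eval z = (n - conj w) * p.eval z :=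
    calc w * p.eval z = (X * derivative (conjReflect n p)).eval z := by
          rw [eval_mul, eval_X, ← hderiv, hwp]
      _ = n * p.eval z - z ^ n * conj (w * p.eval z) := by
          rw [X_mul_derivative_conjReflect hdeg.le, eval_sub, eval_mul, eval_natCast, ← h,
            eval_conjReflect_of_norm_eq_one hdegX hz, eval_mul, eval_X, hwp]
      _ = (n - conj w) * p.eval z := by
          rw [map_mul, mul_left_comm, ← eval_conjReflect_of_norm_eq_one hdeg.le hz, ← h, sub_mul]
  have hre : w.re = n - w.re := by
    simpa using congrArg Complex.re (mul_right_cancel₀ hpz hsymm)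
  have hle : w.re ≤ p.natDegree / 2 :=
    re_mul_derivative_div_le (fun a ha ↦ hz ▸ one_le_norm_of_mem_roots hp a ha) hpz
  have hcast : (p.natDegree : ℝ) < n := Nat.cast_lt.mpr hdeg
  linarith

end ConjugateReciprocal

section BoundedVariation

variable {p : ℂ[X]} {n : ℕ} {z : ℂ}

lemma eval_ne_zero_of_sum_norm_coeff_lt (hdeg : p.natDegree ≤ n)
    (h : ∑ i ∈ Finset.range n, ‖p.coeff (i + 1)‖ < ‖p.coeff 0‖) (hz : ‖z‖ ≤ 1) :
    p.eval z ≠ 0 := by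
  intro hroot
  rw [eval_eq_sum_range' (Nat.lt_succ_of_le hdeg), Finset.sum_range_succ', pow_zero, mul_one,
    add_eq_zero_iff_neg_eq] at hroot
  have hle : ‖p.coeff 0‖ ≤ ∑ i ∈ Finset.range n, ‖p.coeff (i + 1)‖ := by
    rw [← hroot, norm_neg]
    refine norm_sum_le_of_le _ fun i _ ↦ ?_
    rw [norm_mul, norm_pow]
    exact mul_le_of_le_one_right (norm_nonneg _) (pow_le_one₀ (norm_nonneg _) hz)
  exact hle.not_gt h

/-- If `p` equals its conjugate reciprocal of formal degree `n`, then this is a polynomial `q` of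
degree at most `n` with `q - q^* = 2 (1 - X) p`, where `q^*` has formal degree `n + 1`. -/
noncomputable def halfDifference (n : ℕ) (p : ℂ[X]) : ℂ[X] :=
  (1 - X) * p + (C (p.coeff 0) + C (conj (p.coeff 0)) * X ^ (n + 1))

lemma coeff_zero_halfDifference (n : ℕ) (p : ℂ[X]) :
    (halfDifference n p).coeff 0 = 2 * p.coeff 0 := by
  simp [halfDifference, mul_coeff_zero, two_mul]

lemma coeff_succ_halfDifference (n : ℕ) (p : ℂ[X]) (i : ℕ) :
    (halfDifference n p).coeff (i + 1) =
      p.coeff (i + 1) - p.coeff i + if i = n then conj (p.coeff 0) else 0 := by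
  simp only [halfDifference, sub_mul, one_mul, coeff_add, coeff_sub, coeff_X_mul, coeff_C_succ,
    zero_add, coeff_C_mul_X_pow, Nat.add_right_cancel_iff]

lemma natDegree_halfDifference_le (hdeg : p.natDegree ≤ n) (hp : conjReflect n p = p) :
    (halfDifference n p).natDegree ≤ n := by
  refine natDegree_le_iff_coeff_eq_zero.mpr fun j hj ↦ ?_
  obtain ⟨i, rfl⟩ := Nat.exists_eq_succ_of_ne_zero (Nat.ne_zero_of_lt hj)
  rw [coeff_succ_halfDifference, coeff_eq_zero_of_natDegree_lt (hdeg.trans_lt hj)]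
  rcases (Nat.le_of_lt_succ hj).eq_or_lt with rfl | hlt
  · have hlast : p.coeff n = conj (p.coeff 0) := by
      conv_lhs => rw [← hp, coeff_conjReflect, revAt_le le_rfl, Nat.sub_self]
    rw [hlast, if_pos rfl, zero_sub, neg_add_cancel]
  · rw [coeff_eq_zero_of_natDegree_lt (hdeg.trans_lt hlt), if_neg hlt.ne', sub_zero, add_zero]

lemma halfDifference_sub_conjReflect (hdeg : p.natDegree ≤ n) (hp : conjReflect n p = p) :
    halfDifference n p - conjReflect (n + 1) (halfDifference n p) = 2 * ((1 - X) * p) := by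
  have hmul : conjReflect (n + 1) ((1 - X) * p) = (X - 1) * p := by
    have hX : (1 - X : ℂ[X]).natDegree ≤ 1 :=
      (natDegree_sub_le _ _).trans (by simp)
    rw [conjReflect, Polynomial.map_mul, add_comm,
      reflect_mul _ _ (natDegree_map_le.trans hX) (natDegree_map_le.trans hdeg), ← conjReflect,
      ← conjReflect, hp]
    simp [conjReflect, reflect_sub]
  have hadd : conjReflect (n + 1) (C (p.coeff 0) + C (conj (p.coeff 0)) * X ^ (n + 1)) =
      C (p.coeff 0) + C (conj (p.coeff 0)) * X ^ (n + 1) := by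
    simp [conjReflect, revAt_le, add_comm]
  rw [halfDifference, conjReflect_add, hmul, hadd]
  ring

lemma rootMultiplicity_eq_one_of_eval_derivative_ne_zero (hz : p.IsRoot z)
    (hderiv : p.derivative.eval z ≠ 0) : p.rootMultiplicity z = 1 := by
  have hp : p ≠ 0 := fun h ↦ hderiv (by rw [h, derivative_zero, eval_zero])
  have hpos := (rootMultiplicity_pos hp).mpr hz
  have hpred := derivative_rootMultiplicity_of_root hz
  rw [rootMultiplicity_eq_zero hderiv] at hpred
  omega

theorem norm_eq_one_and_rootMultiplicity_eq_one_of_sum_norm_coeff_sub_lt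
    (hdeg : p.natDegree ≤ n) (hp : conjReflect n p = p)
    (hvar : ∑ i ∈ Finset.range n, ‖p.coeff (i + 1) - p.coeff i‖ < 2 * ‖p.coeff 0‖)
    (hz : p.IsRoot z) : ‖z‖ = 1 ∧ p.rootMultiplicity z = 1 := by
  set q := halfDifference n p
  have hq_deg : q.natDegree ≤ n := natDegree_halfDifference_le hdeg hp
  have hq_ne (w : ℂ) (hw : ‖w‖ ≤ 1) : q.eval w ≠ 0 := by
    refine eval_ne_zero_of_sum_norm_coeff_lt hq_deg ?_ hw
    rw [coeff_zero_halfDifference, norm_mul, Complex.norm_two]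
    refine (Finset.sum_congr rfl fun i hi ↦ ?_).trans_lt hvar
    rw [coeff_succ_halfDifference, if_neg (Finset.mem_range.mp hi).ne, add_zero]
  have hq_ne' (w : ℂ) (hw : ‖w‖ < 1) : q.eval w ≠ 0 := hq_ne w hw.le
  have hsub : q - conjReflect (n + 1) q = 2 * ((1 - X) * p) :=
    halfDifference_sub_conjReflect hdeg hp
  have hq_root : q.eval z = (conjReflect (n + 1) q).eval z := by
    rw [← sub_eq_zero, ← eval_sub, hsub, eval_mul, eval_mul, hz.eq_zero, mul_zero, mul_zero]
  have hnorm : ‖z‖ = 1 :=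
    norm_eq_one_of_eval_eq_eval_conjReflect hq_ne' (Nat.lt_succ_of_le hq_deg) hq_root
  refine ⟨hnorm, rootMultiplicity_eq_one_of_eval_derivative_ne_zero hz fun hderiv ↦ ?_⟩
  refine eval_derivative_ne_of_eval_eq_eval_conjReflect hq_ne' (Nat.lt_succ_of_le hq_deg)
    (hq_ne z hnorm.le) hq_root ?_
  rw [← sub_eq_zero, ← eval_sub, ← derivative_sub, hsub]
  simp [derivative_mul, hz.eq_zero, hderiv]

lemma sum_abs_convolution_sub_lt {u : ℕ → ℝ} {k : ℕ} (hu : Monotone u) (hpos : 0 < u 0)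
    (hlt : u k < 2 * u 0) :
    ∑ j ∈ Finset.range k, |u (j + 1) * u (k - (j + 1)) - u j * u (k - j)| < 2 * (u 0 * u k) := by
  have hnonneg (j : ℕ) : 0 ≤ u j := hpos.le.trans (hu j.zero_le)
  have hterm : ∀ j ∈ Finset.range k, |u (j + 1) * u (k - (j + 1)) - u j * u (k - j)| ≤
      u k * ((u (j + 1) - u j) + (u (k - j) - u (k - (j + 1)))) := by
    intro j hj
    have hjk : j < k := Finset.mem_range.mp hj
    have hleft : 0 ≤ u (j + 1) - u j := sub_nonneg.mpr (hu j.le_succ)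
    have hright : 0 ≤ u (k - j) - u (k - (j + 1)) := sub_nonneg.mpr (hu (by omega))
    calc |u (j + 1) * u (k - (j + 1)) - u j * u (k - j)|
        = |u (k - (j + 1)) * (u (j + 1) - u j) - u j * (u (k - j) - u (k - (j + 1)))| := by
          congr 1; ring
      _ ≤ u (k - (j + 1)) * (u (j + 1) - u j) + u j * (u (k - j) - u (k - (j + 1))) := by
          refine (abs_sub _ _).trans_eq ?_
          rw [abs_of_nonneg (mul_nonneg (hnonneg _) hleft),
            abs_of_nonneg (mul_nonneg (hnonneg _) hright)]
      _ ≤ u k * (u (j + 1) - u j) + u k * (u (k - j) - u (k - (j + 1))) := by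
          gcongr
          · exact hu (Nat.sub_le _ _)
          · exact hu hjk.le
      _ = u k * ((u (j + 1) - u j) + (u (k - j) - u (k - (j + 1)))) := (mul_add _ _ _).symm
  have hleft_sum : ∑ j ∈ Finset.range k, (u (j + 1) - u j) = u k - u 0 := Finset.sum_range_sub u k
  have hright_sum : ∑ j ∈ Finset.range k, (u (k - j) - u (k - (j + 1))) = u k - u 0 := by
    simpa using Finset.sum_range_sub' (fun j ↦ u (k - j)) k
  have huk : 0 < u k := hpos.trans_le (hu k.zero_le)
  calc ∑ j ∈ Finset.range k, |u (j + 1) * u (k - (j + 1)) - u j * u (k - j)|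
      ≤ ∑ j ∈ Finset.range k, u k * ((u (j + 1) - u j) + (u (k - j) - u (k - (j + 1)))) :=
        Finset.sum_le_sum hterm
    _ = 2 * ((u k - u 0) * u k) := by
        rw [← Finset.mul_sum, Finset.sum_add_distrib, hleft_sum, hright_sum]; ring
    _ < 2 * (u 0 * u k) := by
        gcongr
        linarith

end BoundedVariation

section BernoulliPolynomial

lemma sum_range_two_mul {M : Type*} [AddCommMonoid M] (f : ℕ → M) (n : ℕ) :
    ∑ i ∈ Finset.range (2 * n), f i = ∑ i ∈ Finset.range n, (f (2 * i) + f (2 * i + 1)) := by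
  induction n with
  | zero => simp
  | succ n ih =>
    rw [Nat.mul_succ, Finset.sum_range_succ, Finset.sum_range_succ, Finset.sum_range_succ, ih,
      add_assoc]

lemma natDegree_bernoulli_le (n : ℕ) : (Polynomial.bernoulli n).natDegree ≤ n :=
  natDegree_le_iff_coeff_eq_zero.mpr fun i hi ↦ by
    rw [coeff_bernoulli, if_neg hi.not_ge]

lemma hasseDeriv_bernoulli (k n : ℕ) :
    hasseDeriv k (Polynomial.bernoulli n) =
      C (n.choose k : ℚ) * Polynomial.bernoulli (n - k) := by
  ext i
  rw [hasseDeriv_coeff, coeff_C_mul, coeff_bernoulli, coeff_bernoulli]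
  rcases le_or_gt (i + k) n with h | h
  · have hchoose : ((i + k).choose k : ℚ) * n.choose (i + k) = n.choose k * (n - k).choose i := by
      have := Nat.choose_mul (n := n) (Nat.le_add_left k i)
      rw [Nat.add_sub_cancel] at this
      exact_mod_cast (mul_comm _ _).trans this
    rw [if_pos h, if_pos (Nat.le_sub_of_add_le h), Nat.sub_sub, add_comm k i, mul_left_comm,
      hchoose, mul_left_comm]
  · rw [if_neg h.not_ge, mul_zero]
    rcases le_or_gt k n with hk | hk
    · rw [if_neg (by omega), mul_zero]
    · rw [Nat.choose_eq_zero_of_lt hk, Nat.cast_zero, zero_mul]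

lemma eval_add_bernoulli (n : ℕ) (x y : ℚ) :
    (Polynomial.bernoulli n).eval (x + y) =
      ∑ i ∈ Finset.range (n + 1),
        n.choose i * (Polynomial.bernoulli i).eval x * y ^ (n - i) := by
  have hdeg : (taylor x (Polynomial.bernoulli n)).natDegree < n + 1 := by
    rw [natDegree_taylor]
    exact Nat.lt_succ_of_le (natDegree_bernoulli_le n)
  rw [add_comm, ← taylor_eval, eval_eq_sum_range' hdeg, ← Finset.sum_flip]
  refine Finset.sum_congr rfl fun i hi ↦ ?_
  have hin : i ≤ n := Nat.le_of_lt_succ (Finset.mem_range.mp hi)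
  rw [taylor_coeff, hasseDeriv_bernoulli, eval_C_mul, Nat.sub_sub_self hin, Nat.choose_symm hin]

lemma eval_add_add_eval_sub_bernoulli (n : ℕ) (x y : ℚ) :
    (Polynomial.bernoulli (2 * n + 1)).eval (x + y) +
        (Polynomial.bernoulli (2 * n + 1)).eval (x - y) =
      2 * ∑ j ∈ Finset.range (n + 1), (2 * n + 1).choose (2 * j + 1) *
        (Polynomial.bernoulli (2 * j + 1)).eval x * y ^ (2 * (n - j)) := by
  rw [sub_eq_add_neg, eval_add_bernoulli, eval_add_bernoulli, ← Finset.sum_add_distrib,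
    show 2 * n + 1 + 1 = 2 * (n + 1) by ring, sum_range_two_mul, Finset.mul_sum]
  refine Finset.sum_congr rfl fun j hj ↦ ?_
  have hjn : j ≤ n := Nat.le_of_lt_succ (Finset.mem_range.mp hj)
  have hodd : Odd (2 * n + 1 - 2 * j) := ⟨n - j, by omega⟩
  have heven : 2 * n + 1 - (2 * j + 1) = 2 * (n - j) := by omega
  rw [hodd.neg_pow, heven, (even_two_mul _).neg_pow]
  ring

end BernoulliPolynomial

section EulerNumber

lemma eulerE_two_mul (j : ℕ) : eulerE (2 * j) = eulerEvenAux j := by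
  rw [eulerE, if_neg (by omega), Nat.mul_div_cancel_left j two_pos]

lemma sum_choose_mul_eulerE {n : ℕ} (hn : n ≠ 0) :
    ∑ j ∈ Finset.range (n + 1), (2 * n).choose (2 * j) * eulerE (2 * j) = 0 := by
  obtain ⟨m, rfl⟩ := Nat.exists_eq_succ_of_ne_zero hn
  simp only [eulerE_two_mul]
  rw [Finset.sum_range_succ, Nat.choose_self, Nat.cast_one, one_mul, eulerEvenAux,
    Finset.sum_attach (Finset.range (m + 1))
      fun j ↦ ((2 * (m + 1)).choose (2 * j) : ℚ) * eulerEvenAux j]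
  exact add_neg_cancel _

/-- Add the expansions of `B_{2n+1}(1/4 + 1/4)` and `B_{2n+1}(1/4 - 1/4)`, which both vanish. -/
lemma sum_choose_mul_eval_bernoulli_one_quarter {n : ℕ} (hn : n ≠ 0) :
    ∑ j ∈ Finset.range (n + 1), (2 * n).choose (2 * j) *
      (4 ^ (2 * j + 1) * (Polynomial.bernoulli (2 * j + 1)).eval (1 / 4) / (2 * j + 1)) = 0 := by
  have hodd : Odd (2 * n + 1) := odd_two_mul_add_one n
  have hzero : (Polynomial.bernoulli (2 * n + 1)).eval 0 = 0 := by
    rw [bernoulli_eval_zero, bernoulli_eq_zero_of_odd hodd (by omega)]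
  have hhalf : (Polynomial.bernoulli (2 * n + 1)).eval (1 / 2) = 0 := by
    have := bernoulli_eval_one_sub (2 * n + 1) (1 / 2)
    rw [hodd.neg_one_pow, sub_half] at this
    linarith
  have hsum := eval_add_add_eval_sub_bernoulli n (1 / 4) (1 / 4)
  rw [sub_self, hzero, show (1 / 4 + 1 / 4 : ℚ) = 1 / 2 by norm_num, hhalf, add_zero, eq_comm,
    mul_eq_zero_iff_left two_ne_zero] at hsum
  rw [← mul_zero (4 ^ (2 * n + 1) / (2 * n + 1) : ℚ), ← hsum, Finset.mul_sum]
  refine Finset.sum_congr rfl fun j hj ↦ ?_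
  have hjn : j ≤ n := Nat.le_of_lt_succ (Finset.mem_range.mp hj)
  have hchoose : (2 * n + 1 : ℚ) * (2 * n).choose (2 * j) =
      (2 * n + 1).choose (2 * j + 1) * (2 * j + 1) := by
    exact_mod_cast Nat.add_one_mul_choose_eq (2 * n) (2 * j)
  have hpow : (4 : ℚ) ^ (2 * n + 1) = 4 ^ (2 * j + 1) * 4 ^ (2 * (n - j)) := by
    rw [← pow_add]; congr 1; omega
  rw [one_div_pow, hpow]
  field_simp
  linear_combination (Polynomial.bernoulli (2 * j + 1)).eval (1 / 4) * hchoose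

lemma eulerE_two_mul_eq_eval_bernoulli (j : ℕ) :
    eulerE (2 * j) =
      -(4 ^ (2 * j + 1) * (Polynomial.bernoulli (2 * j + 1)).eval (1 / 4) / (2 * j + 1)) := by
  induction j using Nat.strong_induction_on with
  | _ j ih =>
    rcases eq_or_ne j 0 with rfl | hj
    · norm_num [eulerE, eulerEvenAux, Polynomial.bernoulli_one]
    have hE := sum_choose_mul_eulerE hj
    have hB := sum_choose_mul_eval_bernoulli_one_quarter hj
    rw [Finset.sum_range_succ, Nat.choose_self, Nat.cast_one, one_mul] at hE hB
    have hlower : ∑ i ∈ Finset.range j, (2 * j).choose (2 * i) * eulerE (2 * i) =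
        -∑ i ∈ Finset.range j, (2 * j).choose (2 * i) *
          (4 ^ (2 * i + 1) * (Polynomial.bernoulli (2 * i + 1)).eval (1 / 4) / (2 * i + 1)) := by
      rw [← Finset.sum_neg_distrib]
      exact Finset.sum_congr rfl fun i hi ↦ by rw [ih i (Finset.mem_range.mp hi), mul_neg]
    linarith

/-- The Euler number `E_{2j}` normalised to `(4 / π) β(2j + 1)`, where
`β(s) = 1 - 3⁻ˢ + 5⁻ˢ - ⋯` is the Dirichlet beta function. -/
noncomputable def normalizedEuler (j : ℕ) : ℝ :=
  (-1) ^ j * eulerE (2 * j) / (2 * j).factorial * (Real.pi / 2) ^ (2 * j)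

lemma normalizedEuler_zero : normalizedEuler 0 = 1 := by
  simp [normalizedEuler, eulerE, eulerEvenAux]

lemma eulerE_two_mul_eq_normalizedEuler (j : ℕ) :
    (eulerE (2 * j) : ℝ) =
      (-1) ^ j * (2 * j).factorial * (2 / Real.pi) ^ (2 * j) * normalizedEuler j := by
  have hsign : ((-1 : ℝ) ^ j) * (-1) ^ j = 1 := by rw [← mul_pow]; norm_num
  have hpi : (2 / Real.pi) ^ (2 * j) * (Real.pi / 2) ^ (2 * j) = 1 := by
    rw [← mul_pow, div_mul_div_cancel₀ Real.pi_ne_zero, div_self two_ne_zero, one_pow]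
  have hfac : ((2 * j).factorial : ℝ) ≠ 0 := Nat.cast_ne_zero.mpr (Nat.factorial_ne_zero _)
  calc (eulerE (2 * j) : ℝ)
      = ((-1) ^ j * (-1) ^ j) * ((2 / Real.pi) ^ (2 * j) * (Real.pi / 2) ^ (2 * j)) *
          eulerE (2 * j) := by rw [hsign, hpi, one_mul, one_mul]
    _ = (-1) ^ j * (2 * j).factorial * (2 / Real.pi) ^ (2 * j) * normalizedEuler j := by
        rw [normalizedEuler]
        field_simp

lemma hasSum_one_div_nat_pow_mul_sin_normalizedEuler {j : ℕ} (hj : j ≠ 0) :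
    HasSum (fun n : ℕ ↦ 1 / (n : ℝ) ^ (2 * j + 1) * Real.sin (2 * Real.pi * n * (1 / 4)))
      (Real.pi / 4 * normalizedEuler j) := by
  convert! hasSum_one_div_nat_pow_mul_sin hj (x := 1 / 4) ⟨by norm_num, by norm_num⟩ using 1
  have hpow : (4 : ℝ) ^ (2 * j + 1) = 2 ^ (2 * j + 1) * 2 ^ (2 * j + 1) := by
    rw [← mul_pow]; norm_num
  rw [show (1 / 4 : ℝ) = algebraMap ℚ ℝ (1 / 4) by simp, eval_map_algebraMap,
    aeval_algebraMap_apply_eq_algebraMap_eval, normalizedEuler, eulerE_two_mul_eq_eval_bernoulli,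
    Nat.factorial_succ, eq_ratCast]
  push_cast
  rw [hpow, mul_pow, div_pow]
  field_simp
  ring

lemma tendsto_sum_one_div_odd_pow (j : ℕ) :
    Tendsto (fun m ↦ ∑ i ∈ Finset.range m, (-1 : ℝ) ^ i * (1 / (2 * i + 1) ^ (2 * j + 1)))
      atTop (𝓝 (Real.pi / 4 * normalizedEuler j)) := by
  rcases eq_or_ne j 0 with rfl | hj
  · simpa [normalizedEuler_zero, div_eq_mul_inv] using Real.tendsto_sum_pi_div_four
  have hsub := (hasSum_one_div_nat_pow_mul_sin_normalizedEuler hj).tendsto_sum_nat.comp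
    (tendsto_id.const_mul_atTop' two_pos)
  refine hsub.congr fun m ↦ ?_
  rw [Function.comp_apply, id_eq, sum_range_two_mul]
  refine Finset.sum_congr rfl fun i _ ↦ ?_
  have hsin_even : Real.sin (2 * Real.pi * (2 * i : ℕ) * (1 / 4)) = 0 := by
    rw [← Real.sin_nat_mul_pi i]; push_cast; ring_nf
  have hsin_odd : Real.sin (2 * Real.pi * (2 * i + 1 : ℕ) * (1 / 4)) = (-1) ^ i := by
    rw [← Real.cos_nat_mul_pi i, ← Real.sin_add_pi_div_two]; push_cast; ring_nf
  rw [hsin_even, hsin_odd, mul_zero, zero_add, mul_comm]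
  push_cast
  rfl

lemma antitone_one_div_odd_pow (s : ℕ) : Antitone fun i : ℕ ↦ 1 / (2 * (i : ℝ) + 1) ^ s := by
  intro a b hab
  dsimp only
  gcongr

lemma pi_div_four_mul_normalizedEuler_le_one (j : ℕ) : Real.pi / 4 * normalizedEuler j ≤ 1 := by
  simpa using (antitone_one_div_odd_pow _).tendsto_le_alternating_series
    (tendsto_sum_one_div_odd_pow j) 0

lemma pi_div_four_mul_normalizedEuler_le (j : ℕ) :
    Real.pi / 4 * normalizedEuler j ≤ 1 - 1 / 3 ^ (2 * j + 1) + 1 / 5 ^ (2 * j + 1) := by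
  have h := (antitone_one_div_odd_pow _).tendsto_le_alternating_series
    (tendsto_sum_one_div_odd_pow j) 1
  norm_num [Finset.sum_range_succ] at h ⊢
  linarith

lemma le_pi_div_four_mul_normalizedEuler (j : ℕ) :
    1 - 1 / 3 ^ (2 * j + 1) ≤ Real.pi / 4 * normalizedEuler j := by
  have h := (antitone_one_div_odd_pow _).alternating_series_le_tendsto
    (tendsto_sum_one_div_odd_pow j) 1
  norm_num [Finset.sum_range_succ] at h ⊢
  linarith

lemma monotone_normalizedEuler : Monotone normalizedEuler := by
  refine monotone_nat_of_le_succ fun j ↦ ?_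
  have hpow : (1 / 5 : ℝ) ^ (2 * j + 1) ≤ 8 / 9 * (1 / 3) ^ (2 * j + 1) :=
    calc (1 / 5 : ℝ) ^ (2 * j + 1) = (3 / 5) ^ (2 * j + 1) * (1 / 3) ^ (2 * j + 1) := by
          rw [← mul_pow]; norm_num
      _ ≤ 8 / 9 * (1 / 3) ^ (2 * j + 1) := by
          gcongr
          exact (pow_le_of_le_one (by norm_num) (by norm_num) (by omega)).trans (by norm_num)
  refine le_of_mul_le_mul_left ?_ (by positivity : 0 < Real.pi / 4)
  calc Real.pi / 4 * normalizedEuler j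
      ≤ 1 - 1 / 3 ^ (2 * j + 1) + 1 / 5 ^ (2 * j + 1) := pi_div_four_mul_normalizedEuler_le j
    _ ≤ 1 - 1 / 3 ^ (2 * (j + 1) + 1) := by
        rw [show 2 * (j + 1) + 1 = 2 * j + 1 + 2 by ring, ← one_div_pow, ← one_div_pow,
          ← one_div_pow, pow_add _ _ 2]
        linarith
    _ ≤ Real.pi / 4 * normalizedEuler (j + 1) := le_pi_div_four_mul_normalizedEuler (j + 1)

lemma normalizedEuler_lt_two (j : ℕ) : normalizedEuler j < 2 := by
  refine lt_of_mul_lt_mul_left ?_ (by positivity : 0 ≤ Real.pi / 4)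
  have := pi_div_four_mul_normalizedEuler_le_one j
  linarith [Real.pi_gt_three]

end EulerNumber

section Spoly

lemma coeff_Spoly (k j : ℕ) :
    (Spoly k).coeff j =
      if j ≤ k then (((2 * k).choose (2 * j) * eulerE (2 * j) * eulerE (2 * (k - j)) : ℚ) : ℂ)
      else 0 := by
  simp only [Spoly, finsetSum_coeff, coeff_C_mul_X_pow, Finset.sum_ite_eq, Finset.mem_range,
    Order.lt_add_one_iff, Nat.mul_sub]

lemma natDegree_Spoly_le (k : ℕ) : (Spoly k).natDegree ≤ k :=
  natDegree_le_iff_coeff_eq_zero.mpr fun j hj ↦ by rw [coeff_Spoly, if_neg hj.not_ge]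

lemma conjReflect_Spoly (k : ℕ) : conjReflect k (Spoly k) = Spoly k := by
  ext j
  rcases le_or_gt j k with hj | hj
  · rw [coeff_conjReflect, revAt_le hj, coeff_Spoly, coeff_Spoly, if_pos hj,
      if_pos (Nat.sub_le k j), Nat.sub_sub_self hj, Nat.mul_sub,
      Nat.choose_symm (Nat.mul_le_mul_left 2 hj), map_ratCast, mul_right_comm]
  · rw [coeff_conjReflect, revAt_eq_self_of_lt hj, coeff_Spoly, if_neg hj.not_ge, map_zero]

lemma exists_coeff_Spoly_eq_mul_normalizedEuler (k : ℕ) :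
    ∃ c : ℝ, c ≠ 0 ∧ ∀ j ≤ k,
      (Spoly k).coeff j = ((c * (normalizedEuler j * normalizedEuler (k - j)) : ℝ) : ℂ) := by
  have hfac (n : ℕ) : (n.factorial : ℝ) ≠ 0 := Nat.cast_ne_zero.mpr n.factorial_ne_zero
  refine ⟨(-1) ^ k * (2 * k).factorial * (2 / Real.pi) ^ (2 * k), ?_, fun j hj ↦ ?_⟩
  · have := hfac (2 * k)
    positivity
  obtain ⟨m, rfl⟩ := Nat.exists_eq_add_of_le hj
  rw [coeff_Spoly, if_pos hj, Nat.add_sub_cancel_left, ← Complex.ofReal_ratCast]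
  congr 1
  push_cast
  rw [eulerE_two_mul_eq_normalizedEuler, eulerE_two_mul_eq_normalizedEuler,
    Nat.cast_choose ℝ (Nat.mul_le_mul_left 2 hj), ← Nat.mul_sub, Nat.add_sub_cancel_left, mul_add,
    pow_add, pow_add]
  have := hfac (2 * j)
  have := hfac (2 * m)
  field_simp

lemma sum_norm_coeff_Spoly_sub_lt (k : ℕ) :
    ∑ j ∈ Finset.range k, ‖(Spoly k).coeff (j + 1) - (Spoly k).coeff j‖ <
      2 * ‖(Spoly k).coeff 0‖ := by
  obtain ⟨c, hc, hcoeff⟩ := exists_coeff_Spoly_eq_mul_normalizedEuler k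
  set u := normalizedEuler
  have hu₀ : u 0 = 1 := normalizedEuler_zero
  have huk : 0 < u k := zero_lt_one.trans_le (hu₀ ▸ monotone_normalizedEuler k.zero_le)
  calc ∑ j ∈ Finset.range k, ‖(Spoly k).coeff (j + 1) - (Spoly k).coeff j‖
      = ∑ j ∈ Finset.range k, |c| * |u (j + 1) * u (k - (j + 1)) - u j * u (k - j)| := by
        refine Finset.sum_congr rfl fun j hj ↦ ?_
        have hjk : j < k := Finset.mem_range.mp hj
        rw [hcoeff _ hjk, hcoeff _ hjk.le, ← Complex.ofReal_sub, Complex.norm_real, ← mul_sub,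
          Real.norm_eq_abs, abs_mul]
    _ = |c| * ∑ j ∈ Finset.range k, |u (j + 1) * u (k - (j + 1)) - u j * u (k - j)| :=
        (Finset.mul_sum _ _ _).symm
    _ < |c| * (2 * (u 0 * u k)) := by
        gcongr
        exact sum_abs_convolution_sub_lt monotone_normalizedEuler (by rw [hu₀]; exact one_pos)
          (by rw [hu₀, mul_one]; exact normalizedEuler_lt_two k)
    _ = 2 * ‖(Spoly k).coeff 0‖ := by
        rw [hcoeff 0 k.zero_le, Nat.sub_zero, Complex.norm_real, Real.norm_eq_abs, abs_mul, hu₀,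
          one_mul, abs_of_pos huk, mul_left_comm]

end Spoly

/-- Every complex root of `S_k` lies on the unit circle, and all roots are simple. -/
theorem Spoly_roots_on_unit_circle_and_simple (k : ℕ) (hk : 1 ≤ k) :
    ∀ z : ℂ, (Spoly k).IsRoot z →
      ‖z‖ = 1 ∧ Polynomial.rootMultiplicity z (Spoly k) = 1 := fun _ hz ↦
  norm_eq_one_and_rootMultiplicity_eq_one_of_sum_norm_coeff_sub_lt (natDegree_Spoly_le k)
    (conjReflect_Spoly k) (sum_norm_coeff_Spoly_sub_lt k) hz
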